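/- arXiv:2509.21547 — 2 statements merged into one kernel-verified Lean document; each statement's English description precedes it below -/
import Mathlib

section
/- Let Z_1, …, Z_n be independent real-valued random variables, each bounded above by 1 almost surely. Then for any λ ∈ [0, 1/2], E[exp( λ Σ_{i=1}^n (E[Z_i] − Z_i) − λ² Σ_{i=1}^n Z_i² )] ≤ 1. -/
open MeasureTheory ProbabilityTheory

lemma exp_sub_sq_le (x : ℝ) (hx : -(1/2) ≤ x) : Real.exp (x - x ^ 2) ≤ 1 + x := by
  rcases le_total 0 x with h | h
  · rw [← Real.le_log_iff_exp_le (by linarith)]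
    refine le_trans ?_ (Real.le_log_one_add_of_nonneg h)
    rw [le_div_iff₀ (by linarith)]
    nlinarith [mul_nonneg h h, mul_nonneg h (mul_nonneg h h)]
  · obtain ⟨y, rfl⟩ : ∃ y, x = -y := ⟨-x, by ring⟩
    have hy0 : 0 ≤ y := by linarith
    have hy : y ≤ 1/2 := by linarith
    have h1 := Real.quadratic_le_exp_of_nonneg (x := y + y ^ 2) (by positivity)
    have h3 : -y - (-y) ^ 2 = -(y + y ^ 2) := by ring
    rw [h3, Real.exp_neg, inv_le_iff_one_le_mul₀ (Real.exp_pos _)]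
    have h2 : 0 ≤ 1 - y - y ^ 2 - y ^ 3 := by
      have a : y ^ 2 ≤ (1/2) ^ 2 := by gcongr
      have b : y ^ 3 ≤ (1/2) ^ 3 := by gcongr
      linarith
    have h4 : (1 + -y) * (1 + (y + y ^ 2) + (y + y ^ 2) ^ 2 / 2) =
        1 + y ^ 2 * (1 - y - y ^ 2 - y ^ 3) / 2 := by ring
    have h5 : 0 ≤ y ^ 2 * (1 - y - y ^ 2 - y ^ 3) / 2 := by positivity
    have h6 := mul_le_mul_of_nonneg_left h1 (show 0 ≤ 1 + -y by linarith)
    linarith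

/-- Let `Z_1, …, Z_n` be independent random variables, each bounded above by 1 almost
surely. Then for any `λ ∈ [0, 1/2]`,
`E[exp(λ Σᵢ (E[Zᵢ] - Zᵢ) - λ² Σᵢ Zᵢ²)] ≤ 1`. -/
theorem unexpected_bernstein_sum_mgf
    {Ω : Type*} [MeasurableSpace Ω] (μ : Measure Ω) [IsProbabilityMeasure μ]
    (n : ℕ) (Z : Fin n → Ω → ℝ)
    (hZmeas : ∀ i, Measurable (Z i))
    (hindep : iIndepFun Z μ)
    (hZle : ∀ i, ∀ᵐ ω ∂μ, Z i ω ≤ 1)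
    (lam : ℝ) (hlam : lam ∈ Set.Icc (0 : ℝ) (1/2))
    (hZint : ∀ i, Integrable (Z i) μ)
    (hexpint : Integrable (fun ω =>
      Real.exp (lam * ∑ i, ((∫ ω', Z i ω' ∂μ) - Z i ω)
        - lam ^ 2 * ∑ i, Z i ω ^ 2)) μ) :
    ∫ ω, Real.exp (lam * ∑ i, ((∫ ω', Z i ω' ∂μ) - Z i ω)
        - lam ^ 2 * ∑ i, Z i ω ^ 2) ∂μ ≤ 1 := by
  obtain ⟨h0, h1⟩ := hlam
  have hprod : ∀ ω, Real.exp (lam * ∑ i, ((∫ ω', Z i ω' ∂μ) - Z i ω)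
        - lam ^ 2 * ∑ i, Z i ω ^ 2) = ∏ i, Real.exp (lam * ((∫ ω', Z i ω' ∂μ) - Z i ω)
        - lam ^ 2 * Z i ω ^ 2) := by
    intro ω
    rw [← Real.exp_sum, Finset.mul_sum, Finset.mul_sum, ← Finset.sum_sub_distrib]
  simp_rw [hprod]
  have hind := hindep.comp (fun i z => Real.exp (lam * ((∫ ω', Z i ω' ∂μ) - z)
        - lam ^ 2 * z ^ 2)) (fun i => by fun_prop)
  have key := hind.integral_fun_prod_eq_prod_integral (fun i => by
    have := hZmeas i
    exact Measurable.aestronglyMeasurable (by fun_prop))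
  simp only [Function.comp_def] at key
  rw [key]
  refine Finset.prod_le_one (fun i _ => integral_nonneg fun ω => (Real.exp_pos _).le) ?_
  intro i _
  have hle : ∫ ω, Real.exp (lam * ((∫ ω', Z i ω' ∂μ) - Z i ω) - lam ^ 2 * Z i ω ^ 2) ∂μ
      ≤ ∫ ω, Real.exp (lam * ∫ ω', Z i ω' ∂μ) * (1 - lam * Z i ω) ∂μ := by
    refine integral_mono_of_nonneg (Filter.Eventually.of_forall fun ω => (Real.exp_pos _).le)
      (((integrable_const _).sub ((hZint i).const_mul _)).const_mul _) ?_
    filter_upwards [hZle i] with ω hω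
    have := exp_sub_sq_le (-(lam * Z i ω)) (by nlinarith)
    have e : lam * ((∫ ω', Z i ω' ∂μ) - Z i ω) - lam ^ 2 * Z i ω ^ 2 =
      lam * (∫ ω', Z i ω' ∂μ) + (-(lam * Z i ω) - (-(lam * Z i ω)) ^ 2) := by ring
    simp only [e]
    rw [Real.exp_add]
    exact mul_le_mul_of_nonneg_left (by linarith) (Real.exp_pos _).le
  refine hle.trans ?_
  rw [integral_const_mul, integral_sub (integrable_const _) ((hZint i).const_mul _),
    integral_const_mul]
  simp only [integral_const, probReal_univ, smul_eq_mul, mul_one]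
  have h7 := Real.add_one_le_exp (-(lam * ∫ ω', Z i ω' ∂μ))
  calc _ ≤ Real.exp (lam * ∫ ω', Z i ω' ∂μ) * Real.exp (-(lam * ∫ ω', Z i ω' ∂μ)) :=
        mul_le_mul_of_nonneg_left (by linarith) (Real.exp_pos _).le
    _ = 1 := by rw [← Real.exp_add, add_neg_cancel, Real.exp_zero]
end

section
/- Let S = ((X_1,Y_1),…,(X_n,Y_n)) be an i.i.d. sample, let h be a fixed prediction rule, and let ℓ be a loss function bounded above by 1. Define L(h) = E[ℓ(h(X),Y)], L̂(h,S) = (1/n) Σ_{i=1}^n ℓ(h(X_i),Y_i), and V̂(h,S) = (1/n) Σ_{i=1}^n ℓ(h(X_i),Y_i)². Then for any λ ∈ [0, 1/2], E[exp( n( λ(L(h) − L̂(h,S)) − λ² V̂(h,S) ) )] ≤ 1, where the expectation is over the draw of S. -/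
open MeasureTheory ProbabilityTheory

theorem aux_exp (x : ℝ) (hx : x ≤ 1/2) : Real.exp (-x - x^2) ≤ 1 - x := by
  rw [← Real.le_log_iff_exp_le (by linarith)]
  rcases le_total x 0 with h0 | h0
  · have h1 := Real.le_log_one_add_of_nonneg (x := -x) (by linarith)
    have h2 : -x - x^2 ≤ 2 * (-x) / (-x + 2) := by
      rw [le_div_iff₀ (by linarith)]
      nlinarith [mul_nonneg (neg_nonneg.2 h0) (sq_nonneg x), sq_nonneg x]
    have h3 : 1 - x = 1 + -x := by ring
    rw [h3]; linarith
  · have h1 := Real.abs_log_sub_add_sum_range_le (x := x) (by rw [abs_of_nonneg h0]; linarith) 4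
    rw [abs_of_nonneg h0] at h1
    have h2 : x ^ (4+1) / (1 - x) ≤ 2 * x^5 := by
      rw [div_le_iff₀ (by linarith)]
      have : 0 ≤ x^5 := by positivity
      have h5 := mul_nonneg this (show 0 ≤ 1 - 2 * x by linarith)
      have h6 : 2 * x^5 * (1 - x) - x^(4+1) = x^5 * (1 - 2 * x) := by ring
      linarith
    have h3 := (abs_le.1 h1).1
    simp [Finset.sum_range_succ] at h3
    norm_num at h3 h2
    have a3 : x^3 ≤ x^2 * (1/2) := by
      have := mul_le_mul_of_nonneg_left hx (sq_nonneg x); nlinarith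
    have a4 : x^4 ≤ x^3 * (1/2) := by
      have := mul_le_mul_of_nonneg_left hx (pow_nonneg h0 3); nlinarith
    have a5 : x^5 ≤ x^4 * (1/2) := by
      have := mul_le_mul_of_nonneg_left hx (pow_nonneg h0 4); nlinarith
    linarith [sq_nonneg x]

/-- Let `S = ((X_1,Y_1),…,(X_n,Y_n))` be an i.i.d. sample from `D`, let `h` be a fixed
prediction rule, and let `ℓ` be a loss function bounded above by 1. With
`L(h) = E[ℓ(h(X),Y)]`, `L̂(h,S) = (1/n) Σᵢ ℓ(h(Xᵢ),Yᵢ)` and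
`V̂(h,S) = (1/n) Σᵢ ℓ(h(Xᵢ),Yᵢ)²`, for any `λ ∈ [0, 1/2]`,
`E[exp(n(λ(L(h) - L̂(h,S)) - λ² V̂(h,S)))] ≤ 1`. -/
theorem unexpected_bernstein_loss_mgf
    {Ω X Y Y' : Type*} [MeasurableSpace Ω] [MeasurableSpace X] [MeasurableSpace Y]
    (μ : Measure Ω) [IsProbabilityMeasure μ]
    (D : Measure (X × Y)) [IsProbabilityMeasure D]
    (n : ℕ) (hn : 0 < n)
    (W : Fin n → Ω → X × Y) (hWmeas : ∀ i, Measurable (W i))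
    (hindep : iIndepFun W μ)
    (hid : ∀ i, μ.map (W i) = D)
    (h : X → Y') (ℓ : Y' → Y → ℝ) (hℓle : ∀ y' y, ℓ y' y ≤ 1)
    (hℓmeas : Measurable (fun p : X × Y => ℓ (h p.1) p.2))
    (hℓint : Integrable (fun p : X × Y => ℓ (h p.1) p.2) D)
    (lam : ℝ) (hlam : lam ∈ Set.Icc (0 : ℝ) (1/2))
    (hexpint : Integrable (fun ω => Real.exp ((n : ℝ) *
      (lam * ((∫ p, ℓ (h p.1) p.2 ∂D) - (n : ℝ)⁻¹ * ∑ i, ℓ (h (W i ω).1) (W i ω).2)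
        - lam ^ 2 * ((n : ℝ)⁻¹ * ∑ i, (ℓ (h (W i ω).1) (W i ω).2) ^ 2)))) μ) :
    ∫ ω, Real.exp ((n : ℝ) *
      (lam * ((∫ p, ℓ (h p.1) p.2 ∂D) - (n : ℝ)⁻¹ * ∑ i, ℓ (h (W i ω).1) (W i ω).2)
        - lam ^ 2 * ((n : ℝ)⁻¹ * ∑ i, (ℓ (h (W i ω).1) (W i ω).2) ^ 2))) ∂μ ≤ 1 := by
  obtain ⟨hl0, hl1⟩ := hlam
  set L := ∫ p, ℓ (h p.1) p.2 ∂D with hL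
  let g : X × Y → ℝ := fun p => Real.exp (lam * L - lam * ℓ (h p.1) p.2 - lam^2 * (ℓ (h p.1) p.2)^2)
  have hg : Measurable g := by
    refine Real.measurable_exp.comp ?_
    exact ((hℓmeas.const_mul lam).const_sub _).sub ((hℓmeas.pow_const 2).const_mul _)
  have hn' : (n : ℝ) ≠ 0 := by positivity
  have heq : ∀ ω, Real.exp ((n : ℝ) *
      (lam * (L - (n : ℝ)⁻¹ * ∑ i, ℓ (h (W i ω).1) (W i ω).2)
        - lam ^ 2 * ((n : ℝ)⁻¹ * ∑ i, (ℓ (h (W i ω).1) (W i ω).2) ^ 2))) = ∏ i, g (W i ω) := by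
    intro ω
    simp only [g]
    rw [← Real.exp_sum]
    congr 1
    simp only [Finset.sum_sub_distrib, ← Finset.mul_sum, Finset.sum_const, Finset.card_univ,
      Fintype.card_fin, nsmul_eq_mul]
    field_simp
  simp_rw [heq]
  have hind := hindep.comp (fun _ => g) (fun _ => hg)
  have hprod := hind.integral_fun_prod_eq_prod_integral
    (fun i => (hg.comp (hWmeas i)).aestronglyMeasurable)
  simp only [Function.comp] at hprod
  rw [hprod]
  have hb : ∀ p, g p ≤ Real.exp (lam * L) * (1 - lam * ℓ (h p.1) p.2) := by
    intro p
    have h1 := aux_exp (lam * ℓ (h p.1) p.2) (by nlinarith [hℓle (h p.1) p.2])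
    have h2 : g p = Real.exp (lam * L) *
        Real.exp (-(lam * ℓ (h p.1) p.2) - (lam * ℓ (h p.1) p.2)^2) := by
      rw [← Real.exp_add]; simp only [g]; congr 1; ring
    rw [h2]
    exact mul_le_mul_of_nonneg_left h1 (Real.exp_pos _).le
  have hI : Integrable (fun p : X × Y => Real.exp (lam * L) * (1 - lam * ℓ (h p.1) p.2)) D :=
    ((integrable_const 1).sub (hℓint.const_mul lam)).const_mul _
  have hD : ∫ p, g p ∂D ≤ 1 := by
    calc ∫ p, g p ∂D ≤ ∫ p, Real.exp (lam * L) * (1 - lam * ℓ (h p.1) p.2) ∂D :=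
          integral_mono_of_nonneg (.of_forall fun p => (Real.exp_pos _).le) hI (.of_forall hb)
      _ = Real.exp (lam * L) * (1 - lam * L) := by
          rw [integral_const_mul, integral_sub (integrable_const 1) (hℓint.const_mul lam),
            integral_const_mul]
          simp [hL]
      _ ≤ Real.exp (lam * L) * Real.exp (-(lam * L)) :=
          mul_le_mul_of_nonneg_left (Real.one_sub_le_exp_neg _) (Real.exp_pos _).le
      _ = 1 := by rw [← Real.exp_add]; simp
  refine Finset.prod_le_one (fun i _ => integral_nonneg fun ω => (Real.exp_pos _).le) fun i _ => ?_
  rw [← integral_map (hWmeas i).aemeasurable hg.aestronglyMeasurable, hid i]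
  exact hD
end
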